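/- Let A, B be positive definite matrices with A ≥ B, let r > 0 and p ≥ 1. Then A^{-r} ♯_{(1+r)/(p+r)} B^p ≤ B ≤ A. (Fujii–Kamei lemma) -/

import Mathlib

open scoped Matrix ComplexOrder

/-- `A^p` for a matrix, via continuous functional calculus with the real power function. -/
noncomputable def mpow {n : ℕ} (A : Matrix (Fin n) (Fin n) ℂ) (p : ℝ) : Matrix (Fin n) (Fin n) ℂ :=
  cfc (fun x : ℝ => x ^ p) A

/-- Matrix absolute value `|X| = (XᴴX)^{1/2}`. -/
noncomputable def matAbs {n : ℕ} (X : Matrix (Fin n) (Fin n) ℂ) : Matrix (Fin n) (Fin n) ℂ :=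
  cfc Real.sqrt (Xᴴ * X)

/-- Loewner order: `X ≤ Y` iff `Y - X` is positive semidefinite. -/
def loewnerLE {n : ℕ} (X Y : Matrix (Fin n) (Fin n) ℂ) : Prop := (Y - X).PosSemidef

/-- The α-weighted matrix geometric mean `A ♯_α B = A^{1/2} (A^{-1/2} B A^{-1/2})^α A^{1/2}`. -/
noncomputable def geomMean {n : ℕ} (α : ℝ) (A B : Matrix (Fin n) (Fin n) ℂ) :
    Matrix (Fin n) (Fin n) ℂ :=
  mpow A (1 / 2) * mpow (mpow A (-(1 / 2)) * B * mpow A (-(1 / 2))) α * mpow A (1 / 2)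

/-!
Congruence moves any pair of strictly positive elements to a pair `(1, c)`, and the weighted
geometric mean is covariant under it: `(t⋆t) ♯_α (t⋆ct) = t⋆ c^α t`. Hence it satisfies
`b ♯_{1-α} a = a ♯_α b`, so monotonicity in the second argument (Löwner–Heinz) gives monotonicity in
the first.

If `0 ≤ r ≤ 1`, then `a^{-r} ≤ b^{-r}`, so `a^{-r} ♯_α b^p ≤ b^{-r} ♯_α b^p = b` for
`α = (1+r)/(p+r)`. For larger exponents, conjugating `a^{-r} ♯_α b^p ≤ a` by `a^{r/2}` gives
`(a^{r/2} b^p a^{r/2})^α ≤ a^{1+r}`. The first case, applied to this inequality and conjugated back,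
shows that `a^{-r} ♯_α b^p`, with `α` depending on `r` as above, does not increase when `r` is
replaced by any `s ∈ [r, 2r + 1]`; so the bound by `b` passes from `r` to `s`.
-/

section WeightedGeomMean

variable {A : Type*} [PartialOrder A] [Ring A] [StarRing A] [TopologicalSpace A]
  [StarOrderedRing A] [Algebra ℝ A] [ContinuousFunctionalCalculus ℝ A IsSelfAdjoint]
  [NonnegSpectrumClass ℝ A]

theorem isSelfAdjoint_rpow (a : A) (x : ℝ) : IsSelfAdjoint (a ^ x) :=
  .of_nonneg CFC.rpow_nonneg

theorem rpow_half_mul_rpow_half {a : A} (ha : IsStrictlyPositive a) (x : ℝ) :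
    a ^ (x / 2) * a ^ (x / 2) = a ^ x := by
  rw [← CFC.rpow_add ha.isUnit, add_halves]

theorem rpow_half_conjugate_rpow {a : A} (ha : IsStrictlyPositive a) (x y : ℝ) :
    a ^ (x / 2) * a ^ y * a ^ (x / 2) = a ^ (x + y) := by
  simp only [← CFC.rpow_add ha.isUnit]
  congr 1
  ring

/-- The `α`-weighted geometric mean `a ♯_α b = a^{1/2} (a^{-1/2} b a^{-1/2})^α a^{1/2}` in a
star-ordered algebra whose real powers come from the continuous functional calculus. It is
meaningful when `a` is strictly positive and `b` is nonnegative. -/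
noncomputable def weightedGeomMean (α : ℝ) (a b : A) : A :=
  a ^ (1 / 2 : ℝ) * (a ^ (-(1 / 2) : ℝ) * b * a ^ (-(1 / 2) : ℝ)) ^ α * a ^ (1 / 2 : ℝ)

theorem weightedGeomMean_one_left (α : ℝ) (b : A) : weightedGeomMean α 1 b = b ^ α := by
  simp only [weightedGeomMean, CFC.one_rpow, one_mul, mul_one]

variable [IsTopologicalRing A] [T2Space A]

theorem rpow_rpow_of_isStrictlyPositive {a : A} (ha : IsStrictlyPositive a) (x y : ℝ) :
    (a ^ x) ^ y = a ^ (x * y) := by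
  obtain rfl | hx := eq_or_ne x 0
  · rw [zero_mul, CFC.rpow_zero a ha.nonneg, CFC.one_rpow]
  · exact CFC.rpow_rpow a x y hx ha

theorem star_left_conjugate_unitary_rpow {c : A} (hc : IsStrictlyPositive c) (u : unitary A)
    (α : ℝ) : (star (u : A) * c * u) ^ α = star (u : A) * c ^ α * u := by
  have h_conj : 0 ≤ star (u : A) * c * u := star_left_conjugate_nonneg hc.nonneg _
  have h_cont : ContinuousOn (fun x : ℝ ↦ x ^ α) (spectrum ℝ c) :=
    continuousOn_id.rpow_const fun x hx ↦ .inl (hc.spectrum_pos hx).ne'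
  have h_conj_cont : Continuous (Unitary.conjStarAlgAut ℝ A (star u)) := by
    rw [funext (f := Unitary.conjStarAlgAut ℝ A (star u)) (Unitary.conjStarAlgAut_star_apply u)]
    fun_prop
  have h_map := StarAlgHomClass.map_cfc (S := ℝ) (Unitary.conjStarAlgAut ℝ A (star u))
    (fun x : ℝ ↦ x ^ α) c h_cont h_conj_cont hc.isSelfAdjoint
    (by simpa only [Unitary.conjStarAlgAut_star_apply] using h_conj.isSelfAdjoint)
  rw [CFC.rpow_eq_cfc_real h_conj, CFC.rpow_eq_cfc_real hc.nonneg]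
  simpa only [Unitary.conjStarAlgAut_star_apply] using h_map.symm

theorem exists_simultaneous_congruence {a b : A} (ha : IsStrictlyPositive a)
    (hb : IsStrictlyPositive b) :
    ∃ t c : A, IsUnit t ∧ IsStrictlyPositive c ∧ a = star t * t ∧ b = star t * c * t := by
  obtain ⟨t, ht, rfl⟩ := CStarAlgebra.isStrictlyPositive_iff_eq_star_mul_self.mp ha
  lift t to Aˣ using ht
  refine ⟨t, star (↑t⁻¹ : A) * b * ↑t⁻¹, t.isUnit,
    t⁻¹.isUnit.isStrictlyPositive_star_left_conjugate_iff.mpr hb, rfl, ?_⟩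
  have ht_star : star (t : A) * star (↑t⁻¹ : A) = 1 := by rw [← star_mul, t.inv_mul, star_one]
  simp only [← mul_assoc, ht_star, one_mul, Units.inv_mul_cancel_right]

theorem weightedGeomMean_star_mul_self {t c : A} (ht : IsUnit t) (hc : IsStrictlyPositive c)
    (α : ℝ) : weightedGeomMean α (star t * t) (star t * c * t) = star t * c ^ α * t := by
  have hp : IsStrictlyPositive (star t * t) :=
    CStarAlgebra.isStrictlyPositive_iff_eq_star_mul_self.mpr ⟨t, ht, rfl⟩
  set h := (star t * t) ^ (1 / 2 : ℝ) with h_def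
  set k := (star t * t) ^ (-(1 / 2) : ℝ)
  have h_mul_k : h * k = 1 := CFC.rpow_mul_rpow_neg _ hp
  have k_mul_h : k * h = 1 := CFC.rpow_neg_mul_rpow _ hp
  have k_star : star k = k := (isSelfAdjoint_rpow _ _).star_eq
  have h_sq : h * h = star t * t := by
    rw [h_def, rpow_half_mul_rpow_half hp, CFC.rpow_one _ hp.nonneg]
  -- `t * k` is the unitary part of the polar decomposition of `t`; it carries `c` to the middle
  -- factor of the mean.
  have hu : star (t * k) * (t * k) = 1 :=
    calc star (t * k) * (t * k) = k * (star t * t) * k := by simp only [star_mul, k_star, mul_assoc]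
      _ = (k * h) * (h * k) := by simp only [← h_sq, mul_assoc]
      _ = 1 := by rw [k_mul_h, h_mul_k, one_mul]
  have hk : IsUnit k := hp.isUnit.cfcRpow _
  lift t * k to unitary A using (ht.mul hk).mem_unitary_of_star_mul_self hu with u hu_def
  have u_mul_h : u * h = t := by rw [hu_def, mul_assoc, k_mul_h, mul_one]
  have h_mul_star_u : h * star (u : A) = star t := by
    rw [← u_mul_h, star_mul, (isSelfAdjoint_rpow _ _).star_eq]
  calc weightedGeomMean α (star t * t) (star t * c * t)
      = h * (k * (star t * c * t) * k) ^ α * h := rfl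
    _ = h * (star (u : A) * c * u) ^ α * h := by
      simp only [hu_def, star_mul, k_star, mul_assoc]
    _ = (h * star (u : A)) * c ^ α * (u * h) := by
      rw [star_left_conjugate_unitary_rpow hc]
      simp only [mul_assoc]
    _ = star t * c ^ α * t := by rw [h_mul_star_u, u_mul_h]

theorem weightedGeomMean_star_left_conjugate {a b t : A} (ha : IsStrictlyPositive a)
    (hb : IsStrictlyPositive b) (ht : IsUnit t) (α : ℝ) :
    weightedGeomMean α (star t * a * t) (star t * b * t) = star t * weightedGeomMean α a b * t := by
  obtain ⟨s, c, hs, hc, rfl, rfl⟩ := exists_simultaneous_congruence ha hb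
  rw [weightedGeomMean_star_mul_self hs hc]
  simpa only [star_mul, mul_assoc] using weightedGeomMean_star_mul_self (hs.mul ht) hc α

theorem weightedGeomMean_swap {a b : A} (ha : IsStrictlyPositive a) (hb : IsStrictlyPositive b)
    (α : ℝ) : weightedGeomMean (1 - α) b a = weightedGeomMean α a b := by
  obtain ⟨t, c, ht, hc, rfl, rfl⟩ := exists_simultaneous_congruence ha hb
  set h := c ^ (1 / 2 : ℝ) with h_def
  have h_star : star h = h := (isSelfAdjoint_rpow _ _).star_eq
  have h_conj (x : ℝ) : h * c ^ x * h = c ^ (1 + x) := rpow_half_conjugate_rpow hc 1 x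
  have hb_eq : star (h * t) * (h * t) = star t * c * t := by
    have h_sq : h * h = c := by rw [h_def, rpow_half_mul_rpow_half hc, CFC.rpow_one c hc.nonneg]
    simp only [star_mul, h_star, mul_assoc, ← mul_assoc h h, h_sq]
  have conj_ht (x : ℝ) : star (h * t) * c ^ x * (h * t) = star t * c ^ (1 + x) * t := by
    simp only [← h_conj, star_mul, h_star, mul_assoc]
  have ha_eq : star (h * t) * c ^ (-1 : ℝ) * (h * t) = star t * t := by
    rw [conj_ht, add_neg_cancel, CFC.rpow_zero c hc.nonneg, mul_one]
  have hh : IsUnit h := hc.isUnit.cfcRpow _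
  calc weightedGeomMean (1 - α) (star t * c * t) (star t * t)
      = star (h * t) * (c ^ (-1 : ℝ)) ^ (1 - α) * (h * t) := by
        rw [← hb_eq, ← ha_eq, weightedGeomMean_star_mul_self (hh.mul ht) (hc.rpow c (-1))]
    _ = star t * c ^ α * t := by
        rw [rpow_rpow_of_isStrictlyPositive hc, conj_ht]
        congr 3
        ring
    _ = weightedGeomMean α (star t * t) (star t * c * t) :=
        (weightedGeomMean_star_mul_self ht hc α).symm

theorem weightedGeomMean_rpow_rpow {a : A} (ha : IsStrictlyPositive a) (α x y : ℝ) :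
    weightedGeomMean α (a ^ x) (a ^ y) = a ^ ((1 - α) * x + α * y) := by
  have ht : IsUnit (a ^ (x / 2)) := ha.isUnit.cfcRpow _
  have h := weightedGeomMean_star_mul_self ht (ha.rpow a (y - x)) α
  rw [(isSelfAdjoint_rpow _ _).star_eq, rpow_half_mul_rpow_half ha, rpow_half_conjugate_rpow ha,
    rpow_rpow_of_isStrictlyPositive ha, rpow_half_conjugate_rpow ha] at h
  convert h using 2 <;> ring_nf

theorem rpow_half_conjugate_weightedGeomMean {a b : A} (ha : IsStrictlyPositive a)
    (hb : IsStrictlyPositive b) (α x y : ℝ) :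
    a ^ (x / 2) * weightedGeomMean α (a ^ y) b * a ^ (x / 2) =
      weightedGeomMean α (a ^ (x + y)) (a ^ (x / 2) * b * a ^ (x / 2)) := by
  have h := weightedGeomMean_star_left_conjugate (ha.rpow a y) hb
    (t := a ^ (x / 2)) (ha.isUnit.cfcRpow _) α
  rwa [(isSelfAdjoint_rpow _ _).star_eq, rpow_half_conjugate_rpow ha, eq_comm] at h

variable {E : Type*} [CStarAlgebra E] [PartialOrder E] [StarOrderedRing E]

theorem rpow_neg_le_rpow_neg {a b : E} (ha : IsStrictlyPositive a) (hab : a ≤ b) {p : ℝ}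
    (hp : p ∈ Set.Icc 0 1) : b ^ (-p) ≤ a ^ (-p) := by
  have h := CFC.rpow_le_rpow hp (CStarAlgebra.rpow_neg_one_le_rpow_neg_one hab ha)
  simpa only [rpow_rpow_of_isStrictlyPositive ha, rpow_rpow_of_isStrictlyPositive (ha.of_le hab),
    neg_one_mul] using h

theorem weightedGeomMean_le_weightedGeomMean_right {α : ℝ} (hα : α ∈ Set.Icc 0 1) (a : E)
    {b c : E} (hbc : b ≤ c) : weightedGeomMean α a b ≤ weightedGeomMean α a c := by
  have h_mid := (isSelfAdjoint_rpow a (-(1 / 2))).conjugate_le_conjugate hbc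
  exact (isSelfAdjoint_rpow a (1 / 2)).conjugate_le_conjugate (CFC.rpow_le_rpow hα h_mid)

theorem weightedGeomMean_le_weightedGeomMean_left {α : ℝ} (hα : α ∈ Set.Icc 0 1) {a b c : E}
    (ha : IsStrictlyPositive a) (hab : a ≤ b) (hc : IsStrictlyPositive c) :
    weightedGeomMean α a c ≤ weightedGeomMean α b c := by
  rw [← weightedGeomMean_swap ha hc, ← weightedGeomMean_swap (ha.of_le hab) hc]
  exact weightedGeomMean_le_weightedGeomMean_right (Set.Icc.one_sub_mem hα) c hab

theorem weightedGeomMean_rpow_neg_rpow_le_of_le_one {a b : E} (hb : IsStrictlyPositive b)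
    (hba : b ≤ a) {p r : ℝ} (hp : 1 ≤ p) (hr : 0 ≤ r) (hr1 : r ≤ 1) :
    weightedGeomMean ((1 + r) / (p + r)) (a ^ (-r)) (b ^ p) ≤ b := by
  have hα : (1 + r) / (p + r) ∈ Set.Icc 0 1 :=
    ⟨by positivity, div_le_one_of_le₀ (by linarith) (by positivity)⟩
  calc weightedGeomMean ((1 + r) / (p + r)) (a ^ (-r)) (b ^ p)
      ≤ weightedGeomMean ((1 + r) / (p + r)) (b ^ (-r)) (b ^ p) :=
        weightedGeomMean_le_weightedGeomMean_left hα ((hb.of_le hba).rpow a (-r))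
          (rpow_neg_le_rpow_neg hb hba ⟨hr, hr1⟩) (hb.rpow b p)
    _ = b ^ (1 : ℝ) := by
        rw [weightedGeomMean_rpow_rpow hb]
        congr 1
        field_simp
        ring
    _ = b := CFC.rpow_one b hb.nonneg

theorem weightedGeomMean_rpow_sub_le_rpow {a d : E} (ha : IsStrictlyPositive a)
    (hd : IsStrictlyPositive d) {p r s : ℝ} (hp : 1 ≤ p) (hr : 0 ≤ r) (hrs : r ≤ s)
    (hsr : s ≤ 2 * r + 1) (hda : d ^ ((1 + r) / (p + r)) ≤ a ^ (1 + r)) :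
    weightedGeomMean ((1 + s) / (p + s)) (a ^ (r - s)) d ≤ d ^ ((1 + r) / (p + r)) := by
  have hq : 1 ≤ (p + r) / (1 + r) := (one_le_div (by positivity)).mpr (by linarith)
  have ht : 0 ≤ (s - r) / (1 + r) := div_nonneg (by linarith) (by positivity)
  have ht1 : (s - r) / (1 + r) ≤ 1 := div_le_one_of_le₀ (by linarith) (by positivity)
  have h_exp : (1 + r) * -((s - r) / (1 + r)) = r - s := by field_simp; ring
  have h_weight : (1 + (s - r) / (1 + r)) / ((p + r) / (1 + r) + (s - r) / (1 + r)) =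
      (1 + s) / (p + s) := by field_simp; ring_nf
  have h_inv : (1 + r) / (p + r) * ((p + r) / (1 + r)) = 1 := by field_simp
  have h := weightedGeomMean_rpow_neg_rpow_le_of_le_one (hd.rpow d _) hda hq ht ht1
  rwa [rpow_rpow_of_isStrictlyPositive ha, rpow_rpow_of_isStrictlyPositive hd, h_exp, h_weight,
    h_inv, CFC.rpow_one d hd.nonneg] at h

theorem weightedGeomMean_rpow_neg_le_weightedGeomMean_rpow_neg {a c : E}
    (ha : IsStrictlyPositive a) (hc : IsStrictlyPositive c) {p r s : ℝ} (hp : 1 ≤ p) (hr : 0 ≤ r)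
    (hrs : r ≤ s) (hsr : s ≤ 2 * r + 1)
    (h_le : weightedGeomMean ((1 + r) / (p + r)) (a ^ (-r)) c ≤ a) :
    weightedGeomMean ((1 + s) / (p + s)) (a ^ (-s)) c ≤
      weightedGeomMean ((1 + r) / (p + r)) (a ^ (-r)) c := by
  set α := (1 + r) / (p + r)
  set d := a ^ (r / 2) * c * a ^ (r / 2) with d_def
  have hd : IsStrictlyPositive d :=
    hc.conjugate_of_isUnit_of_isSelfAdjoint c _ (ha.isUnit.cfcRpow _) (isSelfAdjoint_rpow _ _)
  have d_conj : a ^ (-r / 2) * d * a ^ (-r / 2) = c := by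
    simp only [neg_div, d_def, mul_assoc, CFC.rpow_mul_rpow_neg (r / 2) ha, mul_one]
    rw [← mul_assoc, CFC.rpow_neg_mul_rpow (r / 2) ha, one_mul]
  have mean_eq (β y : ℝ) :
      weightedGeomMean β (a ^ y) c =
        a ^ (-r / 2) * weightedGeomMean β (a ^ (r + y)) d * a ^ (-r / 2) := by
    rw [rpow_half_conjugate_weightedGeomMean ha hd, d_conj, neg_add_cancel_left]
  have d_rpow : weightedGeomMean α (a ^ (r + -r)) d = d ^ α := by
    rw [add_neg_cancel, CFC.rpow_zero a ha.nonneg, weightedGeomMean_one_left]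
  have d_rpow_le : d ^ α ≤ a ^ (1 + r) :=
    calc d ^ α = a ^ (r / 2) * weightedGeomMean α (a ^ (-r)) c * a ^ (r / 2) := by
          rw [rpow_half_conjugate_weightedGeomMean ha hc, d_rpow]
      _ ≤ a ^ (r / 2) * a * a ^ (r / 2) := (isSelfAdjoint_rpow _ _).conjugate_le_conjugate h_le
      _ = a ^ (1 + r) := by
          rw [add_comm, ← rpow_half_conjugate_rpow ha, CFC.rpow_one a ha.nonneg]
  rw [mean_eq, mean_eq α, d_rpow]
  exact (isSelfAdjoint_rpow _ _).conjugate_le_conjugate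
    (weightedGeomMean_rpow_sub_le_rpow ha hd hp hr hrs hsr d_rpow_le)

theorem fujii_kamei_general {a b : E} (hb : IsStrictlyPositive b) (hba : b ≤ a) {p r : ℝ}
    (hr : 0 ≤ r) (hp : 1 ≤ p) : weightedGeomMean ((1 + r) / (p + r)) (a ^ (-r)) (b ^ p) ≤ b := by
  obtain ⟨n, hn⟩ := exists_nat_ge r
  induction n generalizing r with
  | zero =>
    have hr1 : r ≤ 1 := hn.trans (by norm_num)
    exact weightedGeomMean_rpow_neg_rpow_le_of_le_one hb hba hp hr hr1
  | succ n ih =>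
    obtain hr1 | hr1 := le_total r 1
    · exact weightedGeomMean_rpow_neg_rpow_le_of_le_one hb hba hp hr hr1
    · have h_pred := ih (sub_nonneg.mpr hr1) (by push_cast at hn; linarith)
      have h_step := weightedGeomMean_rpow_neg_le_weightedGeomMean_rpow_neg (s := r) (hb.of_le hba)
        (hb.rpow b p) hp (sub_nonneg.mpr hr1) (by linarith) (by linarith) (h_pred.trans hba)
      exact h_step.trans h_pred

end WeightedGeomMean

section Matrix

open scoped MatrixOrder Matrix.Norms.L2Operator

variable {n : ℕ} {A B : Matrix (Fin n) (Fin n) ℂ}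

theorem mpow_eq_rpow (hA : 0 ≤ A) (x : ℝ) : mpow A x = A ^ x :=
  (CFC.rpow_eq_cfc_real hA).symm

theorem geomMean_eq_weightedGeomMean (hA : 0 ≤ A) (hB : 0 ≤ B) (α : ℝ) :
    geomMean α A B = weightedGeomMean α A B := by
  have h_conj : 0 ≤ A ^ (-(1 / 2) : ℝ) * B * A ^ (-(1 / 2) : ℝ) :=
    (isSelfAdjoint_rpow A _).conjugate_nonneg hB
  simp only [geomMean, weightedGeomMean, mpow_eq_rpow hA, mpow_eq_rpow h_conj]

theorem geomMean_mpow_mpow (hA : 0 ≤ A) (hB : 0 ≤ B) (α x y : ℝ) :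
    geomMean α (mpow A x) (mpow B y) = weightedGeomMean α (A ^ x) (B ^ y) := by
  rw [mpow_eq_rpow hA, mpow_eq_rpow hB,
    geomMean_eq_weightedGeomMean CFC.rpow_nonneg CFC.rpow_nonneg]

end Matrix

/-- Fujii–Kamei lemma: if `A ≥ B > 0`, `r > 0` and `p ≥ 1`, then
`A^{-r} ♯_{(1+r)/(p+r)} B^p ≤ B ≤ A`. -/
theorem fujii_kamei {n : ℕ} (A B : Matrix (Fin n) (Fin n) ℂ)
    (hA : A.PosDef) (hB : B.PosDef) (hBA : loewnerLE B A) (r p : ℝ) (hr : 0 < r) (hp : 1 ≤ p) :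
    loewnerLE (geomMean ((1 + r) / (p + r)) (mpow A (-r)) (mpow B p)) B ∧ loewnerLE B A := by
  open scoped MatrixOrder Matrix.Norms.L2Operator in
  rw [geomMean_mpow_mpow hA.posSemidef.nonneg hB.posSemidef.nonneg]
  exact ⟨fujii_kamei_general hB.isStrictlyPositive hBA hr.le hp, hBA⟩
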